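/- Let H be a Hilbert space with orthonormal basis (e_i)_{i∈I} and let G be a finite collection of pairwise disjoint finite groups g ⊆ I. Let 𝒜 := Σ_1 ∩ {u ∈ H : ‖u‖_H = 1} be the set of unit-norm 1-group-sparse vectors, where Σ_1 := {x ∈ H : x = x_g for some g ∈ G}, and let E := span{e_i : i ∈ ∪_{g∈G} g}. Then the atomic norm induced by 𝒜 satisfies: ‖x‖_𝒜 = Σ_{g∈G} ‖x_g‖_H for every x ∈ E, and ‖x‖_𝒜 = +∞ for every x ∉ E. -/

import Mathlib

noncomputable section
open scoped ENNReal NNReal Pointwise RealInnerProductSpace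
open Filter Set Classical MeasureTheory ProbabilityTheory

/-- The secant set `Σ - Σ` of a model set. -/
def secantSet {H : Type*} [NormedAddCommGroup H] (S : Set H) : Set H :=
  {u | ∃ x ∈ S, ∃ y ∈ S, u = x - y}

/-- The normalized secant set of a model set. -/
def normSecant {H : Type*} [NormedAddCommGroup H] [NormedSpace ℝ H] (S : Set H) : Set H :=
  {z | ∃ y ∈ secantSet S, y ≠ 0 ∧ z = ‖y‖⁻¹ • y}

/-- The atomic "norm" induced by a set of atoms `A`: `‖x‖_A = inf {t ≥ 0 : x ∈ t·cl(conv A)}`,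
with value `+∞` when no such `t` exists. -/
def atomicNorm {H : Type*} [NormedAddCommGroup H] [NormedSpace ℝ H] (A : Set H) (x : H) :
    ℝ≥0∞ :=
  sInf {t : ℝ≥0∞ | ∃ r : ℝ, 0 ≤ r ∧ t = ENNReal.ofReal r ∧ x ∈ r • closure (convexHull ℝ A)}


/-- The restriction `x_g` of `x` to the group of coordinates `g`. -/
def groupProj {H : Type*} [NormedAddCommGroup H] [InnerProductSpace ℝ H] {I : Type*}
    (e : I → H) (g : Finset I) (x : H) : H :=
  ∑ i ∈ g, ⟪x, e i⟫ • e i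

/-- The restriction `x_T` of `x` to a set of groups `T`. -/
def groupRestrict {H : Type*} [NormedAddCommGroup H] [InnerProductSpace ℝ H] {I : Type*}
    (e : I → H) (T : Finset (Finset I)) (x : H) : H :=
  ∑ g ∈ T, groupProj e g x

/-- The `k`-group-sparse model `Σ_k` associated to the group collection `G`. -/
def kGroupSparse {H : Type*} [NormedAddCommGroup H] [InnerProductSpace ℝ H] {I : Type*}
    (e : I → H) (G : Finset (Finset I)) (k : ℕ) : Set H :=
  {x | ∃ T ⊆ G, T.card ≤ k ∧ x = groupRestrict e T x}

lemma gp_add {H : Type*} [NormedAddCommGroup H] [InnerProductSpace ℝ H] {I : Type*}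
    (e : I → H) (g : Finset I) (x y : H) :
    groupProj e g (x + y) = groupProj e g x + groupProj e g y := by
  simp [groupProj, inner_add_left, add_smul, Finset.sum_add_distrib]

lemma gp_smul {H : Type*} [NormedAddCommGroup H] [InnerProductSpace ℝ H] {I : Type*}
    (e : I → H) (g : Finset I) (c : ℝ) (x : H) :
    groupProj e g (c • x) = c • groupProj e g x := by
  simp [groupProj, real_inner_smul_left, mul_smul, Finset.smul_sum]

lemma gp_zero {H : Type*} [NormedAddCommGroup H] [InnerProductSpace ℝ H] {I : Type*}
    (e : I → H) (g : Finset I) : groupProj e g 0 = 0 := by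
  simp [groupProj]

lemma gp_cont {H : Type*} [NormedAddCommGroup H] [InnerProductSpace ℝ H] {I : Type*}
    (e : I → H) (g : Finset I) : Continuous (groupProj e g) := by
  unfold groupProj
  fun_prop

lemma gp_inner {H : Type*} [NormedAddCommGroup H] [InnerProductSpace ℝ H] {I : Type*}
    (e : I → H) (he : Orthonormal ℝ e) (g : Finset I) (x : H) (i : I) :
    ⟪groupProj e g x, e i⟫ = if i ∈ g then ⟪x, e i⟫ else 0 := by
  simp [groupProj, sum_inner, real_inner_smul_left, orthonormal_iff_ite.1 he]

lemma gp_basis {H : Type*} [NormedAddCommGroup H] [InnerProductSpace ℝ H] {I : Type*}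
    (e : I → H) (he : Orthonormal ℝ e) (g : Finset I) (i : I) :
    groupProj e g (e i) = if i ∈ g then e i else 0 := by
  simp [groupProj, orthonormal_iff_ite.1 he]

lemma gp_same {H : Type*} [NormedAddCommGroup H] [InnerProductSpace ℝ H] {I : Type*}
    (e : I → H) (he : Orthonormal ℝ e) (g : Finset I) (x : H) :
    groupProj e g (groupProj e g x) = groupProj e g x := by
  conv_lhs => rw [groupProj]
  conv_rhs => rw [groupProj]
  refine Finset.sum_congr rfl fun i hi => ?_
  rw [gp_inner e he, if_pos hi]

lemma gp_disj {H : Type*} [NormedAddCommGroup H] [InnerProductSpace ℝ H] {I : Type*}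
    (e : I → H) (he : Orthonormal ℝ e) (g g' : Finset I) (h : Disjoint g g') (x : H) :
    groupProj e g (groupProj e g' x) = 0 := by
  rw [groupProj]
  refine Finset.sum_eq_zero fun i hi => ?_
  rw [gp_inner e he, if_neg (Finset.disjoint_left.1 h hi), zero_smul]

lemma gp_mem {H : Type*} [NormedAddCommGroup H] [InnerProductSpace ℝ H] {I : Type*}
    (e : I → H) (G : Finset (Finset I)) (g : Finset I) (hg : g ∈ G) (x : H) :
    groupProj e g x ∈ Submodule.span ℝ ((fun i => e i) '' {i : I | ∃ g ∈ G, i ∈ g}) := by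
  refine Submodule.sum_mem _ fun i hi => Submodule.smul_mem _ _ (Submodule.subset_span ?_)
  exact ⟨i, ⟨g, hg, hi⟩, rfl⟩

lemma gp_sum {H : Type*} [NormedAddCommGroup H] [InnerProductSpace ℝ H] {I : Type*}
    (e : I → H) (he : Orthonormal ℝ e) (G : Finset (Finset I))
    (hdisj : ∀ g ∈ G, ∀ g' ∈ G, g ≠ g' → Disjoint g g') (x : H)
    (hx : x ∈ Submodule.span ℝ ((fun i => e i) '' {i : I | ∃ g ∈ G, i ∈ g})) :
    ∑ g ∈ G, groupProj e g x = x := by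
  induction hx using Submodule.span_induction with
  | mem x h =>
    obtain ⟨i, ⟨g, hg, hi⟩, rfl⟩ := h
    rw [Finset.sum_eq_single g]
    · simp [gp_basis e he, hi]
    · intro g' hg' hne
      have := Finset.disjoint_right.1 (hdisj g' hg' g hg hne) hi
      simp [gp_basis e he, this]
    · exact fun h => absurd hg h
  | zero => simp [gp_zero]
  | add x y _ _ hx hy => simp [gp_add, Finset.sum_add_distrib, hx, hy]
  | smul a x _ hx => simp only [gp_smul, ← Finset.smul_sum, hx]

lemma hull_sub {H : Type*} [NormedAddCommGroup H] [InnerProductSpace ℝ H] {I : Type*}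
    (e : I → H) (he : Orthonormal ℝ e) (G : Finset (Finset I))
    (hdisj : ∀ g ∈ G, ∀ g' ∈ G, g ≠ g' → Disjoint g g') (z : H)
    (hz : z ∈ closure (convexHull ℝ
      ({y : H | ∃ g ∈ G, y = groupProj e g y} ∩ {u : H | ‖u‖ = 1}))) :
    z ∈ Submodule.span ℝ ((fun i => e i) '' {i : I | ∃ g ∈ G, i ∈ g}) ∧
      ∑ g ∈ G, ‖groupProj e g z‖ ≤ 1 := by
  have hfin : ({i : I | ∃ g ∈ G, i ∈ g}).Finite := by
    have : {i : I | ∃ g ∈ G, i ∈ g} = ⋃ g ∈ G, (g : Set I) := by ext; simp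
    rw [this]
    exact G.finite_toSet.biUnion fun g _ => g.finite_toSet
  have : FiniteDimensional ℝ
      (Submodule.span ℝ ((fun i => e i) '' {i : I | ∃ g ∈ G, i ∈ g})) :=
    FiniteDimensional.span_of_finite ℝ (hfin.image _)
  have hcl := Submodule.closed_of_finiteDimensional
    (Submodule.span ℝ ((fun i => e i) '' {i : I | ∃ g ∈ G, i ∈ g}))
  have hcl2 : IsClosed {z : H | ∑ g ∈ G, ‖groupProj e g z‖ ≤ 1} :=
    isClosed_le (continuous_finset_sum _ fun g _ => (gp_cont e g).norm) continuous_const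
  refine closure_minimal (convexHull_min ?_ ?_) (hcl.inter hcl2) hz
  · rintro y ⟨⟨g, hg, hy⟩, hy1⟩
    refine ⟨by rw [hy]; exact gp_mem e G g hg y, ?_⟩
    simp only [mem_setOf_eq] at hy1 ⊢
    rw [Finset.sum_eq_single g]
    · rw [← hy, hy1]
    · intro g' hg' hne
      rw [hy, gp_disj e he _ _ (hdisj g' hg' g hg hne), norm_zero]
    · exact fun h => absurd hg h
  · refine (Submodule.convex _).inter ?_
    intro x hx y hy a b ha hb hab
    simp only [mem_setOf_eq] at hx hy ⊢
    calc ∑ g ∈ G, ‖groupProj e g (a • x + b • y)‖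
        ≤ ∑ g ∈ G, (a * ‖groupProj e g x‖ + b * ‖groupProj e g y‖) := by
          refine Finset.sum_le_sum fun g _ => ?_
          rw [gp_add, gp_smul, gp_smul]
          refine (norm_add_le _ _).trans ?_
          rw [norm_smul, norm_smul, Real.norm_of_nonneg ha, Real.norm_of_nonneg hb]
      _ = a * ∑ g ∈ G, ‖groupProj e g x‖ + b * ∑ g ∈ G, ‖groupProj e g y‖ := by
          rw [Finset.sum_add_distrib, Finset.mul_sum, Finset.mul_sum]
      _ ≤ 1 := by nlinarith

lemma scaled_sub {H : Type*} [NormedAddCommGroup H] [InnerProductSpace ℝ H] {I : Type*}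
    (e : I → H) (he : Orthonormal ℝ e) (G : Finset (Finset I))
    (hdisj : ∀ g ∈ G, ∀ g' ∈ G, g ≠ g' → Disjoint g g') (x : H) (r : ℝ) (hr : 0 ≤ r)
    (hx : x ∈ r • closure (convexHull ℝ
      ({y : H | ∃ g ∈ G, y = groupProj e g y} ∩ {u : H | ‖u‖ = 1}))) :
    x ∈ Submodule.span ℝ ((fun i => e i) '' {i : I | ∃ g ∈ G, i ∈ g}) ∧
      ∑ g ∈ G, ‖groupProj e g x‖ ≤ r := by
  obtain ⟨z, hz, rfl⟩ := hx
  obtain ⟨h1, h2⟩ := hull_sub e he G hdisj z hz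
  refine ⟨Submodule.smul_mem _ _ h1, ?_⟩
  simp only [gp_smul, norm_smul, Real.norm_of_nonneg hr, ← Finset.mul_sum]
  nlinarith

lemma upper {H : Type*} [NormedAddCommGroup H] [InnerProductSpace ℝ H] {I : Type*}
    (e : I → H) (he : Orthonormal ℝ e) (G : Finset (Finset I)) (hG : G.Nonempty)
    (hne : ∀ g ∈ G, g.Nonempty)
    (hdisj : ∀ g ∈ G, ∀ g' ∈ G, g ≠ g' → Disjoint g g') (x : H)
    (hx : x ∈ Submodule.span ℝ ((fun i => e i) '' {i : I | ∃ g ∈ G, i ∈ g})) :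
    x ∈ (∑ g ∈ G, ‖groupProj e g x‖) • closure (convexHull ℝ
      ({y : H | ∃ g ∈ G, y = groupProj e g y} ∩ {u : H | ‖u‖ = 1})) := by
  set A := ({y : H | ∃ g ∈ G, y = groupProj e g y} ∩ {u : H | ‖u‖ = 1}) with hA
  set r := ∑ g ∈ G, ‖groupProj e g x‖ with hr
  have hat : ∀ g ∈ G, ∃ a ∈ A, groupProj e g x = ‖groupProj e g x‖ • a := by
    intro g hg
    by_cases h : groupProj e g x = 0
    · obtain ⟨i, hi⟩ := hne g hg
      exact ⟨e i, ⟨⟨g, hg, by simp [gp_basis e he, hi]⟩, he.1 i⟩, by simp [h]⟩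
    · have h' : ‖groupProj e g x‖ ≠ 0 := norm_ne_zero_iff.2 h
      refine ⟨‖groupProj e g x‖⁻¹ • groupProj e g x, ⟨⟨g, hg, ?_⟩, ?_⟩, ?_⟩
      · rw [gp_smul, gp_same e he]
      · simp [norm_smul, h']
      · rw [smul_smul, mul_inv_cancel₀ h', one_smul]
  choose! a haA ha using hat
  have hxs : x = ∑ g ∈ G, ‖groupProj e g x‖ • a g := by
    conv_lhs => rw [← gp_sum e he G hdisj x hx]
    exact Finset.sum_congr rfl ha
  have hr0 : 0 ≤ r := Finset.sum_nonneg fun g _ => norm_nonneg _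
  have hsub : ∀ g ∈ G, a g ∈ convexHull ℝ A := fun g hg => subset_convexHull ℝ A (haA g hg)
  rcases hr0.eq_or_lt with h0 | hpos
  · obtain ⟨g, hg⟩ := hG
    refine ⟨a g, subset_closure (hsub g hg), ?_⟩
    have hz := (Finset.sum_eq_zero_iff_of_nonneg (fun g _ => norm_nonneg _)).1 h0.symm
    have : x = 0 := by
      rw [hxs]
      exact Finset.sum_eq_zero fun g hg => by rw [hz g hg, zero_smul]
    simp only [← h0, zero_smul]
    exact this.symm
  · refine ⟨∑ g ∈ G, (r⁻¹ * ‖groupProj e g x‖) • a g, subset_closure ?_, ?_⟩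
    · refine (convex_convexHull ℝ A).sum_mem (fun g _ => by positivity) ?_ hsub
      rw [← Finset.mul_sum, ← hr, inv_mul_cancel₀ hpos.ne']
    · simp only [mul_smul, ← Finset.smul_sum, ← hxs]
      rw [smul_smul, mul_inv_cancel₀ hpos.ne', one_smul]

/-- the atomic norm induced by the unit-norm `1`-group-sparse vectors is the
group norm `Σ_{g ∈ G} ‖x_g‖` on the span `E` of the covered coordinates, and `+∞` off `E`. -/
theorem stmt17 {H : Type*} [NormedAddCommGroup H] [InnerProductSpace ℝ H] [CompleteSpace H]
    {I : Type*} (B : HilbertBasis I ℝ H) (G : Finset (Finset I)) (hG : G.Nonempty)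
    (hne : ∀ g ∈ G, g.Nonempty)
    (hdisj : ∀ g ∈ G, ∀ g' ∈ G, g ≠ g' → Disjoint g g') :
    (∀ x ∈ Submodule.span ℝ ((fun i => (B i : H)) '' {i : I | ∃ g ∈ G, i ∈ g}),
      atomicNorm
          ({y : H | ∃ g ∈ G, y = groupProj (fun i => B i) g y} ∩ {u : H | ‖u‖ = 1}) x
        = ENNReal.ofReal (∑ g ∈ G, ‖groupProj (fun i => B i) g x‖)) ∧
    (∀ x : H, x ∉ Submodule.span ℝ ((fun i => (B i : H)) '' {i : I | ∃ g ∈ G, i ∈ g}) →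
      atomicNorm
          ({y : H | ∃ g ∈ G, y = groupProj (fun i => B i) g y} ∩ {u : H | ‖u‖ = 1}) x
        = ⊤) := by
  have he : Orthonormal ℝ (fun i => (B i : H)) := B.orthonormal
  refine ⟨fun x hx => le_antisymm ?_ ?_, fun x hx => ?_⟩
  · exact sInf_le ⟨_, Finset.sum_nonneg fun g _ => norm_nonneg _, rfl,
      upper _ he G hG hne hdisj x hx⟩
  · refine le_sInf ?_
    rintro t ⟨r, hr, rfl, hxr⟩
    exact ENNReal.ofReal_le_ofReal (scaled_sub _ he G hdisj x r hr hxr).2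
  · rw [atomicNorm, sInf_eq_top]
    rintro t ⟨r, hr, rfl, hxr⟩
    exact absurd (scaled_sub _ he G hdisj x r hr hxr).1 hx
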